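/- There exists a constant c₁ ∈ (0,1) depending only on the dimension n such that the following holds for every σ ∈ (0, 1/4] and τ > 0. Let U be a continuous function on the closure of Q₁ = B₁(0)×(−1,1) ⊂ ℝⁿ×ℝ which is subcaloric in Q₁, i.e. ∫_{Q₁} U (Δφ + ∂ₜφ) ≥ 0 for every nonnegative φ ∈ C_c^∞(Q₁), and which satisfies U ≤ τ on the parabolic boundary ∂'Q₁ = (B₁(0)×{−1}) ∪ (∂B₁(0)×(−1,1)) and U ≤ 0 on ∂'Q₁ ∩ {x_n > σ}. Then U ≤ (1 − c₁)τ in Q_{1/2} = B_{1/2}(0)×(−1/4, 1/4). -/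

import Mathlib

open MeasureTheory Metric Set Filter Topology
open scoped RealInnerProductSpace

noncomputable section

abbrev Spc (m : ℕ) := EuclideanSpace ℝ (Fin m)
abbrev SpT (m : ℕ) := Spc m × ℝ

namespace ParabolicBernoulli

/-- The `i`-th spatial unit vector. -/
def sUnit (m : ℕ) (i : Fin m) : Spc m := EuclideanSpace.single i 1

/-- Spatial directional derivative of `u` in direction `v`. -/
def sDeriv {m : ℕ} (u : SpT m → ℝ) (v : Spc m) (p : SpT m) : ℝ :=
  fderiv ℝ u p (v, 0)

/-- Time derivative of `u`. -/
def tDeriv {m : ℕ} (u : SpT m → ℝ) (p : SpT m) : ℝ :=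
  fderiv ℝ u p (0, 1)

/-- Spatial gradient of `u`. -/
def sGrad {m : ℕ} (u : SpT m → ℝ) (p : SpT m) : Spc m :=
  (EuclideanSpace.equiv (Fin m) ℝ).symm (fun i => sDeriv u (sUnit m i) p)

/-- Spatial Laplacian of `u`. -/
def sLap {m : ℕ} (u : SpT m → ℝ) (p : SpT m) : ℝ :=
  ∑ i : Fin m, sDeriv (sDeriv u (sUnit m i)) (sUnit m i) p

/-- Heat operator `Δu - ∂ₜ u`. -/
def heatOp {m : ℕ} (u : SpT m → ℝ) (p : SpT m) : ℝ := sLap u p - tDeriv u p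

/-- `u` is caloric on `D`: `C²` there and `Δu - ∂ₜu = 0`. -/
def IsCaloricOn {m : ℕ} (u : SpT m → ℝ) (D : Set (SpT m)) : Prop :=
  ContDiffOn ℝ 2 u D ∧ ∀ p ∈ D, heatOp u p = 0

/-- Parabolic cylinder `Q_r(x₀,t₀) = B_r(x₀) × (t₀ - r², t₀ + r²)`. -/
def Q {m : ℕ} (x₀ : Spc m) (t₀ r : ℝ) : Set (SpT m) :=
  {p | dist p.1 x₀ < r ∧ |p.2 - t₀| < r ^ 2}

/-- Negative parabolic cylinder `Q_r⁻(x₀,t₀) = B_r(x₀) × (t₀ - r², t₀)`. -/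
def Qneg {m : ℕ} (x₀ : Spc m) (t₀ r : ℝ) : Set (SpT m) :=
  {p | dist p.1 x₀ < r ∧ t₀ - r ^ 2 < p.2 ∧ p.2 < t₀}

/-- Positivity set `{u > 0}`. -/
def posSet {m : ℕ} (u : SpT m → ℝ) : Set (SpT m) := {p | 0 < u p}

/-- Parabolic distance from a point to a set. -/
def pardist {m : ℕ} (p : SpT m) (A : Set (SpT m)) : ℝ :=
  sInf ((fun q : SpT m => Real.sqrt (dist p.1 q.1 ^ 2 + |p.2 - q.2|)) '' A)

/-- Parabolic distance between two points. -/
def pardistPt {m : ℕ} (p q : SpT m) : ℝ := Real.sqrt (dist p.1 q.1 ^ 2 + |p.2 - q.2|)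

/-- The backward heat-type kernel `G_{(x₀,t₀)}`. -/
def Gkern {m : ℕ} (x₀ : Spc m) (t₀ : ℝ) (p : SpT m) : ℝ :=
  4 * Real.pi * (t₀ - p.2) * |4 * Real.pi * (t₀ - p.2)| ^ (-(m : ℝ) / 2 - 1) *
    Real.exp (-(dist p.1 x₀) ^ 2 / (4 * (t₀ - p.2)))

/-- Horizontal layer `T_r⁻(t₀) = ℝⁿ × (t₀ - 4r², t₀ - r²)`. -/
def Tlayer (m : ℕ) (t₀ r : ℝ) : Set (SpT m) := {p | t₀ - 4 * r ^ 2 < p.2 ∧ p.2 < t₀ - r ^ 2}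

/-- The Weiss-type monotonicity quantity `Ψ_{(x₀,t₀)}(r)`. -/
def Psi {m : ℕ} (u χ : SpT m → ℝ) (x₀ : Spc m) (t₀ r : ℝ) : ℝ :=
  r ^ (-2 : ℤ) * (∫ p in Tlayer m t₀ r, (‖sGrad u p‖ ^ 2 + χ p) * Gkern x₀ t₀ p) -
    (1 / 2) * r ^ (-2 : ℤ) * ∫ p in Tlayer m t₀ r, (t₀ - p.2)⁻¹ * u p ^ 2 * Gkern x₀ t₀ p

/-- Spatial divergence of a vector field. -/
def sDiv {m : ℕ} (ξ : SpT m → Spc m) (p : SpT m) : ℝ :=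
  ∑ i : Fin m, fderiv ℝ (fun q => ξ q i) p (sUnit m i, 0)

/-- Spatial Jacobian `Dξ` applied to a vector `v`. -/
def sJacApply {m : ℕ} (ξ : SpT m → Spc m) (v : Spc m) (p : SpT m) : Spc m :=
  (EuclideanSpace.equiv (Fin m) ℝ).symm (fun i => fderiv ℝ (fun q => ξ q i) p (v, 0))

/-- Integrand of the domain variation identity. -/
def dvIntegrand {m : ℕ} (u χ : SpT m → ℝ) (ξ : SpT m → Spc m) (p : SpT m) : ℝ :=
  -2 * tDeriv u p * ⟪sGrad u p, ξ p⟫ +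
    (‖sGrad u p‖ ^ 2 + χ p) * sDiv ξ p -
    2 * ⟪sGrad u p, sJacApply ξ (sGrad u p) p⟫

/-- A solution `(u,χ)` of the parabolic free boundary problem
`Δu - ∂ₜu = 0` in `{u>0}`, `|∇u| = 1` on `∂{u>0}`, in the sense of
Definition 6.1 of [Weiss, The parabolic Bernoulli problem]; space dimension `n+1`. -/
structure Solution (n : ℕ) (Ω : Set (SpT (n+1))) (u χ : SpT (n+1) → ℝ) : Prop where
  isOpen_dom : IsOpen Ω
  nonneg : ∀ p ∈ Ω, 0 ≤ u p
  contOn : ContinuousOn u Ω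
  gradContOn : ContinuousOn (sGrad u) Ω
  contDiffOn_pos : ContDiffOn ℝ 2 u (Ω ∩ posSet u)
  caloric_pos : ∀ p ∈ Ω ∩ posSet u, heatOp u p = 0
  chi_meas : Measurable χ
  chi_valued : ∀ᵐ p : SpT (n+1), p ∈ Ω → χ p = 0 ∨ χ p = 1
  chi_ge_ind : ∀ᵐ p : SpT (n+1), p ∈ Ω → 0 < u p → χ p = 1
  tderiv_bound : ∀ R : ℝ, 0 < R → ∃ C : ℝ, ∀ (x₀ : Spc (n+1)) (t₀ r : ℝ), 0 < r →
    Q x₀ t₀ r ⊆ Ω ∩ Q (0 : Spc (n+1)) 0 R →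
    (∫ p in Q x₀ t₀ r, tDeriv u p ^ 2) ≤ C * r ^ (n+1)
  monotonicity : ∀ (x₀ : Spc (n+1)) (t₀ ρ σ : ℝ), 0 < ρ → ρ < σ →
    {p : SpT (n+1) | t₀ - 4 * σ ^ 2 < p.2 ∧ p.2 < t₀} ⊆ Ω →
    Psi u χ x₀ t₀ ρ ≤ Psi u χ x₀ t₀ σ
  domain_variation : ∀ ξ : SpT (n+1) → Spc (n+1), (∃ K, LipschitzWith K ξ) →
    HasCompactSupport ξ → tsupport ξ ⊆ Ω →
    (∫ p in Ω, dvIntegrand u χ ξ p) = 0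
  halfplane : ∀ κ : ℝ, 0 < κ → ∃ δ : ℝ, 0 < δ ∧
    ∀ (x₀ : Spc (n+1)) (t₀ r θ : ℝ), 0 < r → Q x₀ t₀ r ⊆ Ω →
    (∀ q ∈ Q (0 : Spc (n+1)) 0 1,
      abs (u (x₀ + r • q.1, t₀ + r ^ 2 * q.2) / r - θ * |q.1 (Fin.last n)|) < δ) →
    θ < 1 + κ

/-- The flatness class `u ∈ F(σ₊,σ₋,τ)` in `Q_ρ(x₀,t₀)` in direction `ν`. -/
structure FlatnessClass (n : ℕ) (Ω : Set (SpT (n+1))) (u χ : SpT (n+1) → ℝ)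
    (σp σm τ : ℝ) (x₀ : Spc (n+1)) (t₀ ρ : ℝ) (ν : Spc (n+1)) : Prop where
  sol : Solution n Ω u χ
  cyl_subset : Q x₀ t₀ ρ ⊆ Ω
  unit : ‖ν‖ = 1
  fb_mem : (x₀, t₀ + ρ ^ 2) ∈ frontier (posSet u)
  u_zero : ∀ p ∈ Q x₀ t₀ ρ, σp * ρ ≤ ⟪p.1 - x₀, ν⟫ → u p = 0
  chi_zero : ∀ᵐ p : SpT (n+1), p ∈ Q x₀ t₀ ρ → σp * ρ ≤ ⟪p.1 - x₀, ν⟫ → χ p = 0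
  chi_one : ∀ᵐ p : SpT (n+1), p ∈ Q x₀ t₀ ρ → ⟪p.1 - x₀, ν⟫ ≤ -(σm * ρ) → χ p = 1
  u_lower : ∀ p ∈ Q x₀ t₀ ρ, ⟪p.1 - x₀, ν⟫ ≤ -(σm * ρ) →
    -(⟪p.1 - x₀, ν⟫ + σm * ρ) ≤ u p
  grad_le : ∀ p ∈ Q x₀ t₀ ρ, ‖sGrad u p‖ ≤ 1 + τ

end ParabolicBernoulli

namespace ParabolicBernoulli

/-- The parabolic boundary `∂'Q₁ = (B₁(0)×{-1}) ∪ (∂B₁(0)×(-1,1))` of `Q₁`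
(space dimension `n+1`). -/
def parBdryQ1 (n : ℕ) : Set (SpT (n+1)) :=
  {p : SpT (n+1) | dist p.1 0 < 1 ∧ p.2 = -1} ∪
    {p : SpT (n+1) | dist p.1 0 = 1 ∧ -1 < p.2 ∧ p.2 < 1}

section SecondDerivativeTest

variable {E : Type*} [NormedAddCommGroup E] [NormedSpace ℝ E]

theorem hasDerivAt_comp_line {f : E → ℝ} (hf : Differentiable ℝ f) (p v : E) (s : ℝ) :
    HasDerivAt (fun s : ℝ => f (p + s • v)) (fderiv ℝ f (p + s • v) v) s := by
  have h : HasDerivAt (fun s : ℝ => p + s • v) v s := by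
    simpa using ((hasDerivAt_id s).smul_const v).const_add p
  exact (hf (p + s • v)).hasFDerivAt.comp_hasDerivAt s h

theorem differentiable_fderiv_apply {f : E → ℝ} (hf : ContDiff ℝ 2 f) (v : E) :
    Differentiable ℝ fun x => fderiv ℝ f x v :=
  ((hf.fderiv_right (m := 1) (by norm_num)).differentiable one_ne_zero).clm_apply
    (differentiable_const v)

theorem fderiv_fderiv_apply_nonpos_of_isLocalMax {f : E → ℝ} (hf : ContDiff ℝ 2 f) {p v : E}
    (h : IsLocalMax (fun s : ℝ => f (p + s • v)) 0) :
    fderiv ℝ (fun x => fderiv ℝ f x v) p v ≤ 0 := by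
  set g : ℝ → ℝ := fun s => f (p + s • v)
  have hd : deriv g = fun s => fderiv ℝ f (p + s • v) v :=
    funext fun s => (hasDerivAt_comp_line (hf.differentiable two_ne_zero) p v s).deriv
  have hdd : deriv (deriv g) 0 = fderiv ℝ (fun x => fderiv ℝ f x v) p v := by
    rw [hd, (hasDerivAt_comp_line (differentiable_fderiv_apply hf v) p v 0).deriv]
    simp
  by_contra! hpos
  rw [← hdd] at hpos
  have hmin : IsLocalMin g 0 := isLocalMin_of_deriv_deriv_pos hpos h.deriv_eq_zero
    (hasDerivAt_comp_line (hf.differentiable two_ne_zero) p v 0).continuousAt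
  have hconst : g =ᶠ[𝓝 0] fun _ => g 0 := by
    filter_upwards [hmin, h] with s h1 h2 using le_antisymm h2 h1
  have hzero : deriv (deriv g) 0 = 0 := by
    rw [hconst.deriv.deriv_eq]
    simp
  exact hpos.ne' hzero

end SecondDerivativeTest

section Mollification

variable {E : Type*} [NormedAddCommGroup E] [NormedSpace ℝ E] [MeasurableSpace E] [BorelSpace E]
  [FiniteDimensional ℝ E]

theorem fderiv_convolution_right_apply {μ : Measure E} [μ.IsAddHaarMeasure] (L : ℝ →L[ℝ] ℝ →L[ℝ] ℝ)
    {f g : E → ℝ} (hf : LocallyIntegrable f μ) (hg : ContDiff ℝ 1 g) (hcg : HasCompactSupport g)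
    (v : E) :
    (fun x => fderiv ℝ (convolution f g L μ) x v) = convolution f (fun x => fderiv ℝ g x v) L μ := by
  funext x
  rw [(hcg.hasFDerivAt_convolution_right L hf hg x).fderiv]
  exact convolution_precompR_apply L hf (hcg.fderiv ℝ) (hg.continuous_fderiv one_ne_zero) x v

end Mollification

theorem fderiv_comp_const_sub_apply {E : Type*} [NormedAddCommGroup E] [NormedSpace ℝ E]
    {g : E → ℝ} (hg : Differentiable ℝ g) (p q v : E) :
    fderiv ℝ (fun x => g (p - x)) q v = -fderiv ℝ g (p - q) v := by
  have h := (hg (p - q)).hasFDerivAt.comp q ((hasFDerivAt_id q).const_sub p)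
  have h' : HasFDerivAt (fun x => g (p - x)) _ q := h
  rw [h'.fderiv]
  simp

section HeatOperator

variable {m : ℕ}

instance isAddHaarMeasure_volume_SpT : (volume : Measure (SpT m)).IsAddHaarMeasure :=
  Measure.prod.instIsAddHaarMeasure volume volume

theorem sLap_comp_const_sub {g : SpT m → ℝ} (hg : ContDiff ℝ 2 g) (p q : SpT m) :
    sLap (fun x => g (p - x)) q = sLap g (p - q) := by
  refine Finset.sum_congr rfl fun i _ => ?_
  have h1 : sDeriv (fun x => g (p - x)) (sUnit m i) =
      fun x => -sDeriv g (sUnit m i) (p - x) :=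
    funext fun x => fderiv_comp_const_sub_apply (hg.differentiable two_ne_zero) p x _
  have hd : Differentiable ℝ (sDeriv g (sUnit m i)) := differentiable_fderiv_apply hg _
  rw [h1]
  have h2 := fderiv_comp_const_sub_apply hd p q (sUnit m i, (0 : ℝ))
  unfold sDeriv at h2 ⊢
  rw [fderiv_fun_neg, neg_apply, h2, neg_neg]

theorem heatOp_sub {u v : SpT m → ℝ} (hu : ContDiff ℝ 2 u) (hv : ContDiff ℝ 2 v) (p : SpT m) :
    heatOp (fun x => u x - v x) p = heatOp u p - heatOp v p := by
  have h1 (e : SpT m) (x : SpT m) : fderiv ℝ (fun x => u x - v x) x e =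
      fderiv ℝ u x e - fderiv ℝ v x e := by
    rw [fderiv_fun_sub (hu.differentiable two_ne_zero x) (hv.differentiable two_ne_zero x)]
    rfl
  have h2 (i : Fin m) : sDeriv (sDeriv (fun x => u x - v x) (sUnit m i)) (sUnit m i) p =
      sDeriv (sDeriv u (sUnit m i)) (sUnit m i) p -
        sDeriv (sDeriv v (sUnit m i)) (sUnit m i) p := by
    have h3 : sDeriv (fun x => u x - v x) (sUnit m i) =
        fun x => sDeriv u (sUnit m i) x - sDeriv v (sUnit m i) x := funext fun x => h1 _ x
    rw [h3]
    have hdu : Differentiable ℝ (sDeriv u (sUnit m i)) := differentiable_fderiv_apply hu _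
    have hdv : Differentiable ℝ (sDeriv v (sUnit m i)) := differentiable_fderiv_apply hv _
    unfold sDeriv at hdu hdv ⊢
    rw [fderiv_fun_sub (hdu p) (hdv p)]
    rfl
  simp only [heatOp, sLap, tDeriv, h1, h2, Finset.sum_sub_distrib]
  ring

/-- At a spatial local maximum which is also a maximum over slightly earlier times,
the heat operator is nonpositive. -/
theorem heatOp_nonpos_of_parabolic_max {f : SpT m → ℝ} (hf : ContDiff ℝ 2 f) {p : SpT m}
    (hx : IsLocalMax (fun x => f (x, p.2)) p.1)
    (ht : ∀ᶠ s in 𝓝[<] p.2, f (p.1, s) ≤ f p) : heatOp f p ≤ 0 := by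
  have hlap : sLap f p ≤ 0 := by
    refine Finset.sum_nonpos fun i _ => ?_
    refine fderiv_fderiv_apply_nonpos_of_isLocalMax hf ?_
    have hc : Tendsto (fun s : ℝ => p.1 + s • sUnit m i) (𝓝 0) (𝓝 p.1) := by
      have : Continuous fun s : ℝ => p.1 + s • sUnit m i := by fun_prop
      simpa using this.tendsto 0
    filter_upwards [hc.eventually hx] with s hs
    have h1 : p + s • (sUnit m i, (0 : ℝ)) = (p.1 + s • sUnit m i, p.2) := by
      ext <;> simp
    rw [h1, zero_smul, add_zero]
    exact hs
  have htime : 0 ≤ tDeriv f p := by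
    have h1 : HasDerivAt (fun s : ℝ => (p.1, s)) ((0 : Spc m), (1 : ℝ)) p.2 :=
      (hasDerivAt_const p.2 p.1).prodMk (hasDerivAt_id p.2)
    have h2 : HasDerivAt (fun s : ℝ => f (p.1, s)) (tDeriv f p) p.2 :=
      (hf.differentiable two_ne_zero (p.1, p.2)).hasFDerivAt.comp_hasDerivAt p.2 h1
    have h3 := (hasDerivWithinAt_iff_tendsto_slope' (s := Iio p.2) (by simp)).1
      h2.hasDerivWithinAt
    refine ge_of_tendsto h3 ?_
    filter_upwards [ht, self_mem_nhdsWithin] with s hs hs'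
    rw [slope_def_field]
    exact div_nonneg_of_nonpos (sub_nonpos.2 hs) (sub_nonpos.2 (le_of_lt hs'))
  unfold heatOp
  linarith

/-- The heat operator commutes with convolution. -/
theorem heatOp_convolution (L : ℝ →L[ℝ] ℝ →L[ℝ] ℝ) {f g : SpT m → ℝ}
    (hf : LocallyIntegrable f) (hg : ContDiff ℝ (⊤ : ℕ∞) g) (hcg : HasCompactSupport g) :
    heatOp (convolution f g L volume) = convolution f (heatOp g) L volume := by
  have hder (v : SpT m) : ContDiff ℝ (⊤ : ℕ∞) fun x => fderiv ℝ g x v :=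
    (hg.fderiv_right (m := (⊤ : ℕ∞)) (by simp)).clm_apply contDiff_const
  have hder2 (v w : SpT m) : Continuous fun x => fderiv ℝ (fun y => fderiv ℝ g y v) x w :=
    (((hder v).continuous_fderiv (by simp))).clm_apply continuous_const
  have hc (v : SpT m) : HasCompactSupport fun x => fderiv ℝ g x v := hcg.fderiv_apply ℝ v
  have hs (i : Fin m) : sDeriv (sDeriv (convolution f g L volume) (sUnit m i)) (sUnit m i) =
      convolution f (sDeriv (sDeriv g (sUnit m i)) (sUnit m i)) L volume := by
    have h1 : sDeriv (convolution f g L volume) (sUnit m i) =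
        convolution f (sDeriv g (sUnit m i)) L volume :=
      fderiv_convolution_right_apply L hf (hg.of_le (by exact_mod_cast le_top)) hcg _
    rw [h1]
    exact fderiv_convolution_right_apply L hf ((hder _).of_le (by exact_mod_cast le_top))
      (hc _) _
  have ht : tDeriv (convolution f g L volume) = convolution f (tDeriv g) L volume :=
    fderiv_convolution_right_apply L hf (hg.of_le (by exact_mod_cast le_top)) hcg _
  funext p
  have hex (i : Fin m) : ConvolutionExistsAt f
      (sDeriv (sDeriv g (sUnit m i)) (sUnit m i)) p L volume :=
    ((hc _).fderiv_apply ℝ _).convolutionExists_right L hf (hder2 _ _) p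
  have hext : ConvolutionExistsAt f (tDeriv g) p L volume :=
    (hc _).convolutionExists_right L hf (hder _).continuous p
  simp only [heatOp, sLap, hs, ht, convolution_def]
  rw [← integral_finsetSum _ fun i _ => hex i, ← integral_sub
    (integrable_finsetSum _ fun i _ => hex i) hext]
  simp only [map_sub, map_sum]

end HeatOperator

section Comparison

variable {m : ℕ}

theorem mem_Q_zero_one {p : SpT m} :
    p ∈ Q (0 : Spc m) 0 1 ↔ ‖p.1‖ < 1 ∧ -1 < p.2 ∧ p.2 < 1 := by
  simp [Q, abs_lt]

theorem Q_zero_one_eq_prod : Q (0 : Spc m) 0 1 = ball (0 : Spc m) 1 ×ˢ Ioo (-1 : ℝ) 1 := by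
  ext p
  simp [mem_Q_zero_one]

theorem closure_Q_zero_one :
    closure (Q (0 : Spc m) 0 1) = closedBall (0 : Spc m) 1 ×ˢ Icc (-1 : ℝ) 1 := by
  rw [Q_zero_one_eq_prod, closure_prod_eq, closure_ball _ one_ne_zero,
    closure_Ioo (by norm_num)]

theorem isOpen_Q_zero_one : IsOpen (Q (0 : Spc m) 0 1) := by
  rw [Q_zero_one_eq_prod]
  exact isOpen_ball.prod isOpen_Ioo

/-- Mollifying a distributionally subcaloric function gives a classically subcaloric one. -/
theorem heatOp_convolution_nonneg_of_subcaloric {D : Set (SpT m)} (hD : MeasurableSet D)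
    {U : SpT m → ℝ} (hU : IntegrableOn U D)
    (hsub : ∀ φ : SpT m → ℝ, ContDiff ℝ (⊤ : ℕ∞) φ → HasCompactSupport φ →
      tsupport φ ⊆ D → (∀ p, 0 ≤ φ p) → 0 ≤ ∫ p in D, U p * (sLap φ p + tDeriv φ p))
    {η : SpT m → ℝ} (hη : ContDiff ℝ (⊤ : ℕ∞) η) (hη0 : ∀ p, 0 ≤ η p) {r : ℝ}
    (hηr : tsupport η ⊆ closedBall 0 r) {p : SpT m} (hp : closedBall p r ⊆ D) :
    0 ≤ heatOp (convolution (D.indicator U) η (ContinuousLinearMap.lsmul ℝ ℝ).flip volume) p := by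
  have hcη : HasCompactSupport η :=
    (isCompact_closedBall (0 : SpT m) r).of_isClosed_subset (isClosed_tsupport η) hηr
  have hloc : LocallyIntegrable (D.indicator U) :=
    ((integrable_indicator_iff hD).2 hU).locallyIntegrable
  rw [heatOp_convolution _ hloc hη hcη]
  have hη2 : ContDiff ℝ 2 η := contDiff_infty.1 hη 2
  have hsupp : tsupport (fun q => η (p - q)) ⊆ closedBall p r := by
    refine closure_minimal (fun q hq => ?_) isClosed_closedBall
    have := hηr (subset_tsupport _ (show p - q ∈ Function.support η from hq))
    rwa [mem_closedBall_zero_iff, ← dist_eq_norm, dist_comm] at this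
  have key := hsub (fun q => η (p - q)) (hη.comp (contDiff_const.sub contDiff_id))
    ((isCompact_closedBall p r).of_isClosed_subset (isClosed_tsupport _) hsupp)
    (hsupp.trans hp) (fun q => hη0 _)
  rw [← integral_indicator hD] at key
  rw [convolution_def]
  refine key.trans_eq (integral_congr_ae (Eventually.of_forall fun q => ?_))
  have ht : tDeriv (fun q => η (p - q)) q = -tDeriv η (p - q) :=
    fderiv_comp_const_sub_apply (hη2.differentiable two_ne_zero) p q _
  by_cases hq : q ∈ D
  · simp only [indicator_of_mem hq, sLap_comp_const_sub hη2, ht, ContinuousLinearMap.flip_apply,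
      ContinuousLinearMap.lsmul_apply, heatOp, smul_eq_mul]
    ring
  · simp [indicator_of_notMem hq]

theorem closedBall_subset_Q_zero_one {p : SpT m} {r : ℝ} (hx : ‖p.1‖ < 1 - r)
    (ht : -1 + r < p.2) (ht' : p.2 < 1 - r) : closedBall p r ⊆ Q (0 : Spc m) 0 1 := by
  intro q hq
  rw [mem_closedBall, Prod.dist_eq, max_le_iff, Real.dist_eq, abs_le] at hq
  have := norm_le_norm_add_norm_sub' q.1 p.1
  rw [← dist_eq_norm] at this
  refine mem_Q_zero_one.2 ⟨?_, ?_, ?_⟩ <;> linarith [hq.1, hq.2.1, hq.2.2]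

/-- Comparison principle on `Q₁` between a continuous distributional subsolution of the heat
equation and a strict classical supersolution. -/
theorem le_of_subcaloric_of_heatOp_neg {n : ℕ} {U v : SpT (n + 1) → ℝ}
    (hU : ContinuousOn U (closure (Q (0 : Spc (n + 1)) 0 1)))
    (hsub : ∀ φ : SpT (n + 1) → ℝ, ContDiff ℝ (⊤ : ℕ∞) φ → HasCompactSupport φ →
      tsupport φ ⊆ Q (0 : Spc (n + 1)) 0 1 → (∀ p, 0 ≤ φ p) →
      0 ≤ ∫ p in Q (0 : Spc (n + 1)) 0 1, U p * (sLap φ p + tDeriv φ p))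
    (hv : ContDiff ℝ 2 v) (hvneg : ∀ p ∈ Q (0 : Spc (n + 1)) 0 1, heatOp v p < 0)
    (hbdry : ∀ p ∈ parBdryQ1 n, U p ≤ v p) {p₀ : SpT (n + 1)}
    (hp₀ : p₀ ∈ Q (0 : Spc (n + 1)) 0 1) : U p₀ ≤ v p₀ := by
  by_contra! hlt
  set D : Set (SpT (n + 1)) := Q 0 0 1 with hD
  obtain ⟨hx₀, ht₀, ht₀'⟩ := mem_Q_zero_one.1 hp₀
  have hDc : IsCompact (closure D) := by
    rw [closure_Q_zero_one]
    exact (isCompact_closedBall _ _).prod isCompact_Icc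
  set M := U p₀ - v p₀ with hM
  have hMpos : 0 < M := sub_pos.2 hlt
  have hW : ContinuousOn (fun p => U p - v p) (closure D) := hU.sub hv.continuous.continuousOn
  -- the set where `U - v` is large stays away from the parabolic boundary
  set K : Set (SpT (n + 1)) := closedBall 0 1 ×ˢ Icc (-1) p₀.2 with hK
  have hKD : K ⊆ closure D := by
    rw [closure_Q_zero_one]
    exact prod_mono_right (Icc_subset_Icc_right ht₀'.le)
  have hKc : IsCompact K := (isCompact_closedBall _ _).prod isCompact_Icc
  set A : Set (SpT (n + 1)) := K ∩ (fun p => U p - v p) ⁻¹' Ici (M / 2) with hA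
  have hAc : IsCompact A := hKc.of_isClosed_subset
    ((hW.mono hKD).preimage_isClosed_of_isClosed hKc.isClosed isClosed_Ici) inter_subset_left
  have hp₀A : p₀ ∈ A :=
    ⟨⟨by simpa using hx₀.le, ht₀.le, le_rfl⟩, by simp only [mem_preimage, mem_Ici]; linarith⟩
  have hAint : ∀ p ∈ A, ‖p.1‖ < 1 ∧ -1 < p.2 := by
    rintro p ⟨hpK, hpW⟩
    have hpW' : M / 2 ≤ U p - v p := hpW
    have hpx : ‖p.1‖ ≤ 1 := by simpa using hpK.1
    have htime : -1 < p.2 := by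
      refine lt_of_le_of_ne hpK.2.1 fun hbot => ?_
      have hcl : p ∈ closure (ball (0 : Spc (n + 1)) 1 ×ˢ {(-1 : ℝ)}) := by
        rw [closure_prod_eq, closure_ball _ one_ne_zero, closure_singleton]
        exact ⟨hpK.1, hbot.symm⟩
      have hsubset : ball (0 : Spc (n + 1)) 1 ×ˢ {(-1 : ℝ)} ⊆ closure D := by
        rw [closure_Q_zero_one]
        exact prod_mono ball_subset_closedBall (by simp)
      have := ContinuousWithinAt.closure_le hcl ((hU p (hKD hpK)).mono hsubset)
        hv.continuous.continuousWithinAt fun q hq => hbdry q (Or.inl ⟨hq.1, hq.2⟩)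
      linarith
    refine ⟨lt_of_le_of_ne hpx fun hlat => ?_, htime⟩
    have := hbdry p (Or.inr ⟨by simpa using hlat, htime, hpK.2.2.trans_lt ht₀'⟩)
    linarith
  obtain ⟨d, hd, hdA⟩ : ∃ d > 0, ∀ p ∈ A, d < 1 - ‖p.1‖ ∧ d < p.2 + 1 := by
    obtain ⟨p, hp, hmin⟩ := hAc.exists_isMinOn ⟨p₀, hp₀A⟩
      (f := fun p : SpT (n + 1) => min (1 - ‖p.1‖) (p.2 + 1)) (by fun_prop)
    have hpos : 0 < min (1 - ‖p.1‖) (p.2 + 1) :=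
      lt_min (by linarith [(hAint p hp).1]) (by linarith [(hAint p hp).2])
    refine ⟨_, half_pos hpos, fun q hq => ?_⟩
    exact lt_min_iff.1 ((half_lt_self hpos).trans_le (hmin hq))
  obtain ⟨δ, hδ, hδU⟩ := Metric.uniformContinuousOn_iff.1
    (hDc.uniformContinuousOn_of_continuous hU) (M / 8) (by linarith)
  -- mollification of `U`
  obtain ⟨r, hr, hrd, hrt, hrδ⟩ : ∃ r > 0, r < d ∧ r < 1 - p₀.2 ∧ r < δ := by
    have h : 0 < min d (min (1 - p₀.2) δ) := lt_min hd (lt_min (by linarith) hδ)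
    obtain ⟨r, hr, hr'⟩ := exists_between h
    exact ⟨r, hr, by simpa using hr'⟩
  let b : ContDiffBump (0 : SpT (n + 1)) := ⟨r / 2, r, half_pos hr, half_lt_self hr⟩
  set V : SpT (n + 1) → ℝ := convolution (D.indicator U) (b.normed volume)
    (ContinuousLinearMap.lsmul ℝ ℝ).flip volume with hV
  have hUint : IntegrableOn U D := (hU.integrableOn_compact hDc).mono_set subset_closure
  have hmeas : MeasurableSet D := isOpen_Q_zero_one.measurableSet
  have hIint : Integrable (D.indicator U) := (integrable_indicator_iff hmeas).2 hUint
  have hVsmooth : ContDiff ℝ 2 V :=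
    b.hasCompactSupport_normed.contDiff_convolution_right (n := 2) _ hIint.locallyIntegrable
      b.contDiff_normed
  set A' : Set (SpT (n + 1)) := closedBall 0 (1 - d) ×ˢ Icc (-1 + d) p₀.2 with hA'
  have hball : ∀ p ∈ A', closedBall p r ⊆ D := by
    rintro p ⟨hpx, hpt⟩
    have hpx' : ‖p.1‖ ≤ 1 - d := by simpa using hpx
    exact closedBall_subset_Q_zero_one (by linarith) (by linarith [hpt.1]) (by linarith [hpt.2])
  have hclose : ∀ p ∈ A', |V p - U p| ≤ M / 8 := by
    intro p hp
    have hpD : p ∈ D := hball p hp (mem_closedBall_self hr.le)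
    have h := b.dist_normed_convolution_le (μ := volume) (x₀ := p) (ε := M / 8)
      hIint.aestronglyMeasurable fun q hq => by
        have hqD : q ∈ D := hball p hp (ball_subset_closedBall hq)
        rw [indicator_of_mem hqD, indicator_of_mem hpD]
        exact (hδU q (subset_closure hqD) p (subset_closure hpD)
          ((mem_ball.1 hq).trans hrδ)).le
    rw [← convolution_flip, indicator_of_mem hpD, Real.dist_eq] at h
    exact h
  have hAA' : A ⊆ A' := fun p hp =>
    ⟨by simpa using (by linarith [(hdA p hp).1] : ‖p.1‖ ≤ 1 - d),
      by linarith [(hdA p hp).2], hp.1.2.2⟩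
  have hA'K : A' ⊆ K :=
    prod_mono (closedBall_subset_closedBall (by linarith)) (Icc_subset_Icc_left (by linarith))
  obtain ⟨p₁, hp₁, hmax⟩ := ((isCompact_closedBall (0 : Spc (n + 1)) (1 - d)).prod
    (isCompact_Icc (a := -1 + d) (b := p₀.2))).exists_isMaxOn ⟨p₀, hAA' hp₀A⟩
      (hVsmooth.sub hv).continuous.continuousOn
  have hp₁A : p₁ ∈ A := by
    refine ⟨hA'K hp₁, ?_⟩
    have h0 : V p₀ - v p₀ ≤ V p₁ - v p₁ := hmax (hAA' hp₀A)
    have h1 := abs_le.1 (hclose p₀ (hAA' hp₀A))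
    have h2 := abs_le.1 (hclose p₁ hp₁)
    simp only [mem_preimage, mem_Ici]
    linarith
  obtain ⟨hd1, hd2⟩ := hdA p₁ hp₁A
  have hnonpos : heatOp (fun p => V p - v p) p₁ ≤ 0 := by
    refine heatOp_nonpos_of_parabolic_max (hVsmooth.sub hv) ?_ ?_
    · have : ball (0 : Spc (n + 1)) (1 - d) ∈ 𝓝 p₁.1 :=
        isOpen_ball.mem_nhds (by simpa using (by linarith : ‖p₁.1‖ < 1 - d))
      filter_upwards [this] with x hx
      exact hmax (show (x, p₁.2) ∈ A' from ⟨ball_subset_closedBall hx, hp₁.2⟩)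
    · filter_upwards [Ioo_mem_nhdsLT (show -1 + d < p₁.2 by linarith)] with s hs
      exact hmax (show (p₁.1, s) ∈ A' from ⟨hp₁.1, hs.1.le, hs.2.le.trans hp₁.2.2⟩)
  have hVnonneg : 0 ≤ heatOp V p₁ :=
    heatOp_convolution_nonneg_of_subcaloric hmeas hUint hsub b.contDiff_normed
      b.nonneg_normed b.tsupport_normed_eq.subset (hball p₁ hp₁)
  rw [heatOp_sub hVsmooth hv] at hnonpos
  have := hvneg p₁ (hball p₁ hp₁ (mem_closedBall_self hr.le))
  linarith

end Comparison

section Barrier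

theorem heatOp_sub_mul_exp {m : ℕ} {q : SpT m → ℝ} (hq : ContDiff ℝ 2 q) (a b α : ℝ)
    (p : SpT m) :
    heatOp (fun x => a - b * Real.exp (-α * q x)) p =
      -b * α * Real.exp (-α * q p) *
        (α * ∑ i, sDeriv q (sUnit m i) p ^ 2 - sLap q p + tDeriv q p) := by
  have hexp (x : SpT m) : HasFDerivAt (fun x => Real.exp (-α * q x))
      (Real.exp (-α * q x) • (-α • fderiv ℝ q x)) x :=
    ((hq.differentiable two_ne_zero x).hasFDerivAt.const_mul (-α)).exp
  have h1 (e x : SpT m) : fderiv ℝ (fun x => a - b * Real.exp (-α * q x)) x e =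
      b * α * (Real.exp (-α * q x) * fderiv ℝ q x e) := by
    rw [(((hexp x).const_mul b).const_sub a).fderiv]
    simp
    ring
  have h2 (i : Fin m) :
      sDeriv (sDeriv (fun x => a - b * Real.exp (-α * q x)) (sUnit m i)) (sUnit m i) p =
        b * α * (Real.exp (-α * q p) * (sDeriv (sDeriv q (sUnit m i)) (sUnit m i) p -
          α * sDeriv q (sUnit m i) p ^ 2)) := by
    have h3 : sDeriv (fun x => a - b * Real.exp (-α * q x)) (sUnit m i) =
        fun x => b * α * (Real.exp (-α * q x) * sDeriv q (sUnit m i) x) :=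
      funext fun x => h1 _ x
    have hd : Differentiable ℝ (sDeriv q (sUnit m i)) := differentiable_fderiv_apply hq _
    rw [h3]
    conv_lhs => unfold sDeriv
    have h4 := ((hexp p).mul (hd p).hasFDerivAt).const_mul (b * α)
    erw [h4.fderiv]
    simp [sDeriv]
    ring
  simp only [heatOp, sLap, tDeriv, h1, h2, ← Finset.mul_sum, Finset.sum_sub_distrib]
  ring

/-- The parabolic profile `|x'|² - x_n + t²`, whose sublevel sets carry the barrier. -/
def barrierProfile (n : ℕ) (p : SpT (n + 1)) : ℝ :=
  ∑ i : Fin n, p.1 i.castSucc ^ 2 - p.1 (Fin.last n) + p.2 ^ 2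

variable {n : ℕ}

theorem contDiff_barrierProfile : ContDiff ℝ 2 (barrierProfile n) := by
  unfold barrierProfile
  fun_prop

theorem fderiv_barrierProfile_apply (p e : SpT (n + 1)) :
    fderiv ℝ (barrierProfile n) p e =
      ∑ i : Fin n, 2 * p.1 i.castSucc * e.1 i.castSucc - e.1 (Fin.last n) + 2 * p.2 * e.2 := by
  have hc (j : Fin (n + 1)) : HasFDerivAt (fun p : SpT (n + 1) => p.1 j)
      ((EuclideanSpace.proj j : Spc (n + 1) →L[ℝ] ℝ).comp
        (ContinuousLinearMap.fst ℝ (Spc (n + 1)) ℝ)) p :=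
    ContinuousLinearMap.hasFDerivAt ((EuclideanSpace.proj j : Spc (n + 1) →L[ℝ] ℝ).comp
        (ContinuousLinearMap.fst ℝ (Spc (n + 1)) ℝ))
  have h := ((HasFDerivAt.fun_sum (u := Finset.univ) fun (i : Fin n) _ =>
    (hc i.castSucc).pow 2).sub (hc (Fin.last n))).add
      ((hasFDerivAt_snd (𝕜 := ℝ) (p := p)).pow 2)
  have h' : HasFDerivAt (barrierProfile n) _ p := h
  rw [h'.fderiv]
  simp [mul_assoc]

theorem sDeriv_barrierProfile_castSucc (i : Fin n) :
    sDeriv (barrierProfile n) (sUnit (n + 1) i.castSucc) = fun p => 2 * p.1 i.castSucc := by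
  funext p
  simp [sDeriv, fderiv_barrierProfile_apply, sUnit, Fin.castSucc_ne_last]

theorem sDeriv_barrierProfile_last (p : SpT (n + 1)) :
    sDeriv (barrierProfile n) (sUnit (n + 1) (Fin.last n)) p = -1 := by
  simp [sDeriv, fderiv_barrierProfile_apply, sUnit, Fin.castSucc_ne_last]

theorem tDeriv_barrierProfile (p : SpT (n + 1)) : tDeriv (barrierProfile n) p = 2 * p.2 := by
  simp [tDeriv, fderiv_barrierProfile_apply]

theorem sLap_barrierProfile (p : SpT (n + 1)) : sLap (barrierProfile n) p = 2 * n := by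
  have hlast : sDeriv (sDeriv (barrierProfile n) (sUnit (n + 1) (Fin.last n)))
      (sUnit (n + 1) (Fin.last n)) p = 0 := by
    rw [funext sDeriv_barrierProfile_last]
    simp [sDeriv]
  have hcast (i : Fin n) : sDeriv (sDeriv (barrierProfile n) (sUnit (n + 1) i.castSucc))
      (sUnit (n + 1) i.castSucc) p = 2 := by
    rw [sDeriv_barrierProfile_castSucc]
    have h := (ContinuousLinearMap.hasFDerivAt (x := p)
      ((EuclideanSpace.proj i.castSucc : Spc (n + 1) →L[ℝ] ℝ).comp
        (ContinuousLinearMap.fst ℝ (Spc (n + 1)) ℝ))).const_mul 2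
    have h' : HasFDerivAt (fun p : SpT (n + 1) => 2 * p.1 i.castSucc) _ p := h
    rw [sDeriv, h'.fderiv]
    simp [sUnit]
  rw [sLap, Fin.sum_univ_castSucc, hlast]
  simp only [hcast]
  simp [mul_comm]

theorem heatOp_barrier_neg {a b : ℝ} (hb : 0 < b) {p : SpT (n + 1)} (hp : -1 < p.2) :
    heatOp (fun x => a - b * Real.exp (-(2 * n + 3) * barrierProfile n x)) p < 0 := by
  rw [heatOp_sub_mul_exp contDiff_barrierProfile, sLap_barrierProfile, tDeriv_barrierProfile,
    Fin.sum_univ_castSucc, sDeriv_barrierProfile_last]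
  have hS : 0 ≤ ∑ i : Fin n, sDeriv (barrierProfile n) (sUnit (n + 1) i.castSucc) p ^ 2 :=
    Finset.sum_nonneg fun i _ => sq_nonneg _
  have hα : (0 : ℝ) < 2 * n + 3 := by positivity
  have hprod := mul_nonneg hα.le hS
  rw [neg_mul, neg_mul, neg_mul, neg_lt_zero]
  refine mul_pos (by positivity) ?_
  nlinarith

theorem barrierProfile_eq (p : SpT (n + 1)) :
    barrierProfile n p = ‖p.1‖ ^ 2 - p.1 (Fin.last n) ^ 2 - p.1 (Fin.last n) + p.2 ^ 2 := by
  rw [EuclideanSpace.real_norm_sq_eq, Fin.sum_univ_castSucc, barrierProfile]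
  ring

theorem abs_last_le_norm (x : Spc (n + 1)) : |x (Fin.last n)| ≤ ‖x‖ :=
  PiLp.norm_apply_le x (Fin.last n)

theorem neg_one_le_barrierProfile {p : SpT (n + 1)} (hp : ‖p.1‖ ≤ 1) :
    -1 ≤ barrierProfile n p := by
  have h1 : 0 ≤ ∑ i : Fin n, p.1 i.castSucc ^ 2 := Finset.sum_nonneg fun i _ => sq_nonneg _
  have h2 := (abs_le.1 ((abs_last_le_norm p.1).trans hp)).2
  unfold barrierProfile
  nlinarith [sq_nonneg p.2]

theorem barrierProfile_ge_of_mem_parBdry {p : SpT (n + 1)} (hp : p ∈ parBdryQ1 n)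
    (hlast : p.1 (Fin.last n) ≤ 1 / 4) : 5 / 8 ≤ barrierProfile n p := by
  rcases hp with ⟨-, ht⟩ | ⟨hx, -⟩
  · have h1 : 0 ≤ ∑ i : Fin n, p.1 i.castSucc ^ 2 := Finset.sum_nonneg fun i _ => sq_nonneg _
    rw [barrierProfile, ht]
    linarith
  · rw [dist_zero_right] at hx
    have h2 := abs_le.1 ((abs_last_le_norm p.1).trans hx.le)
    rw [barrierProfile_eq, hx]
    nlinarith [sq_nonneg p.2, mul_nonneg (sub_nonneg.2 hlast)
      (by linarith [h2.1] : 0 ≤ p.1 (Fin.last n) + 1)]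

theorem barrierProfile_le_of_mem_Q_half {p : SpT (n + 1)} (hp : p ∈ Q (0 : Spc (n + 1)) 0 (1 / 2)) :
    barrierProfile n p ≤ 9 / 16 := by
  obtain ⟨hx, ht⟩ := hp
  rw [dist_zero_right] at hx
  rw [sub_zero] at ht
  have h1 : ‖p.1‖ ^ 2 ≤ 1 / 4 := by nlinarith [norm_nonneg p.1]
  have h2 : p.2 ^ 2 ≤ 1 / 16 := by
    rw [← sq_abs]
    nlinarith [abs_nonneg p.2]
  rw [barrierProfile_eq]
  nlinarith [sq_nonneg (p.1 (Fin.last n) + 1 / 2)]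

end Barrier

/-- subcaloric comparison step of the flatness improvement lemma:
there is `c₁ ∈ (0,1)` depending only on the dimension such that for every
`σ ∈ (0,1/4]` and `τ > 0`, every continuous function `U` on the closure of `Q₁` which
is subcaloric in `Q₁` and satisfies `U ≤ τ` on `∂'Q₁` and `U ≤ 0` on
`∂'Q₁ ∩ {x_n > σ}` satisfies `U ≤ (1-c₁)τ` in `Q_{1/2}`. -/
theorem statement13 (n : ℕ) :
    ∃ c₁ : ℝ, 0 < c₁ ∧ c₁ < 1 ∧
      ∀ σ τ : ℝ, 0 < σ → σ ≤ 1 / 4 → 0 < τ →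
      ∀ U : SpT (n+1) → ℝ,
        ContinuousOn U (closure (Q (0 : Spc (n+1)) 0 1)) →
        (∀ φ : SpT (n+1) → ℝ, ContDiff ℝ (⊤ : ℕ∞) φ → HasCompactSupport φ →
          tsupport φ ⊆ Q (0 : Spc (n+1)) 0 1 → (∀ p, 0 ≤ φ p) →
          0 ≤ ∫ p in Q (0 : Spc (n+1)) 0 1, U p * (sLap φ p + tDeriv φ p)) →
        (∀ p ∈ parBdryQ1 n, U p ≤ τ) →
        (∀ p ∈ parBdryQ1 n, σ < p.1 (Fin.last n) → U p ≤ 0) →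
        ∀ p ∈ Q (0 : Spc (n+1)) 0 (1 / 2), U p ≤ (1 - c₁) * τ := by
  set α : ℝ := 2 * n + 3 with hα
  have hαpos : 0 < α := by positivity
  set ε : ℝ := Real.exp (-α) with hε
  have hεpos : 0 < ε := Real.exp_pos _
  set k : ℝ := Real.exp (-α * (5 / 8)) with hk
  have hkpos : 0 < k := Real.exp_pos _
  have hgap : k < Real.exp (-α * (9 / 16)) := Real.exp_lt_exp.2 (by linarith)
  refine ⟨ε * (Real.exp (-α * (9 / 16)) - k), mul_pos hεpos (sub_pos.2 hgap), ?_, ?_⟩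
  · have h1 : ε < 1 := Real.exp_lt_one_iff.2 (by linarith)
    have h2 : Real.exp (-α * (9 / 16)) < 1 := Real.exp_lt_one_iff.2 (by linarith)
    nlinarith
  intro σ τ hσ hσ' hτ U hU hsub hbdry hbdry0 p hp
  set v : SpT (n + 1) → ℝ := fun x =>
    (τ + τ * ε * k) - τ * ε * Real.exp (-α * barrierProfile n x) with hv
  have hv_eq (x : SpT (n + 1)) :
      v x = τ * (1 - ε * (Real.exp (-α * barrierProfile n x) - k)) := by
    simp only [hv]
    ring
  have hvsmooth : ContDiff ℝ 2 v :=
    contDiff_const.sub (contDiff_const.mul (contDiff_const.mul contDiff_barrierProfile).exp)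
  have hUv : ∀ x ∈ parBdryQ1 n, U x ≤ v x := by
    intro x hx
    rw [hv_eq]
    rcases lt_or_ge σ (x.1 (Fin.last n)) with hlt | hge
    · refine (hbdry0 x hx hlt).trans (mul_nonneg hτ.le ?_)
      have hnorm : ‖x.1‖ ≤ 1 := by
        rcases hx with ⟨h, -⟩ | ⟨h, -⟩
        · simpa using h.le
        · simpa using h.le
      have h1 : ε * Real.exp (-α * barrierProfile n x) ≤ 1 := by
        rw [hε, ← Real.exp_add]
        refine Real.exp_le_one_iff.2 ?_
        nlinarith [neg_one_le_barrierProfile hnorm]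
      nlinarith [mul_pos hεpos hkpos]
    · have h1 : Real.exp (-α * barrierProfile n x) ≤ k := Real.exp_le_exp.2
        (by nlinarith [barrierProfile_ge_of_mem_parBdry hx (hge.trans hσ')])
      have h2 := mul_nonneg hτ.le (mul_nonneg hεpos.le (sub_nonneg.2 h1))
      nlinarith [hbdry x hx]
  have hpQ : p ∈ Q (0 : Spc (n + 1)) 0 1 :=
    ⟨hp.1.trans (by norm_num), hp.2.trans (by norm_num)⟩
  have hle := le_of_subcaloric_of_heatOp_neg hU hsub hvsmooth
    (fun x hx => heatOp_barrier_neg (mul_pos hτ hεpos) (mem_Q_zero_one.1 hx).2.1) hUv hpQ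
  rw [hv_eq] at hle
  have h1 : Real.exp (-α * (9 / 16)) ≤ Real.exp (-α * barrierProfile n p) := Real.exp_le_exp.2
    (by nlinarith [barrierProfile_le_of_mem_Q_half hp])
  have h2 := mul_nonneg hτ.le (mul_nonneg hεpos.le (sub_nonneg.2 h1))
  nlinarith

end ParabolicBernoulli
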